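/- arXiv:math/0204346 — 3 statements merged into one kernel-verified Lean document; each statement's English description precedes it below -/
import Mathlib

section
/- There exists a unique formal power series F ∈ ℚ[[d₁,d₂,d₃]] such that (Cosh(F) + d₁·d₃·Sinh(F))² · φ(d₁+d₂) · φ(d₂+d₃) = φ(d₂) · φ(d₁+d₂+d₃). Equivalently, F is the unique solution of cosh(Fk) + d₁d₃·sinh(Fk)/k = √(φ(d₂)φ(d₁+d₂+d₃)/(φ(d₁+d₂)φ(d₂+d₃))), where k² = −d₁d₂d₃(d₁+d₂+d₃) and the square root is the one with constant term 1. Moreover the constant term of F is 1/24. -/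
noncomputable section

abbrev R3 := MvPowerSeries (Fin 3) ℚ

def d (i : Fin 3) : R3 := MvPowerSeries.X i

def mdeg {n : ℕ} (m : Fin n →₀ ℕ) : ℕ := m.sum fun _ k => k

/-- K = −d₁d₂d₃(d₁+d₂+d₃) -/
def K3 : R3 := -(d 0 * d 1 * d 2 * (d 0 + d 1 + d 2))

/-- Cosh(F) = Σ F^{2n} K^n/(2n)! (coefficientwise finite sum) -/
def Cosh (F : R3) : R3 := fun m => ∑ n ∈ Finset.range (mdeg m + 1),
  MvPowerSeries.coeff (R := ℚ) m ((((2*n).factorial : ℚ))⁻¹ • (F ^ (2*n) * K3 ^ n))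

def Sinh (F : R3) : R3 := fun m => ∑ n ∈ Finset.range (mdeg m + 1),
  MvPowerSeries.coeff (R := ℚ) m ((((2*n+1).factorial : ℚ))⁻¹ • (F ^ (2*n+1) * K3 ^ n))

/-- φ(g) = Σ g^{2n}/(4^n (2n+1)!) for g with zero constant term -/
def phi3 (g : R3) : R3 := fun m => ∑ n ∈ Finset.range (mdeg m + 1),
  MvPowerSeries.coeff (R := ℚ) m ((((4:ℚ)^n * (2*n+1).factorial)⁻¹) • g ^ (2*n))

/-!
Put `a = d₁d₃` and `K = -a b`. Since `Cosh F - 1` and `Sinh F - F` are divisible by `K`, one can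
write `Cosh F + a Sinh F = 1 + a T(F)`, where `F ↦ T(F) - F` raises the order of agreement of its
arguments. The right-hand side `φ(d₂) φ(d₁+d₂+d₃)` agrees with `φ(d₁+d₂) φ(d₂+d₃)` when `d₁ = 0` or
`d₃ = 0`, so their ratio is `1 + a Q`, and comparing quadratic terms gives `Q(0) = 1/12`. After
cancelling `a` the equation is `2 T(F) + a T(F)² = Q`. Its left-hand side is a contractive
perturbation of `2 F`, hence a bijection in `F`, and has constant term `2 F(0)`.
-/

section OrderIdeal

open MvPowerSeries

variable {σ R : Type*} [CommRing R] {f g : MvPowerSeries σ R} {a b n : ℕ}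

variable (σ R) in
/-- The ideal of power series of order at least `n`. Congruence modulo it is agreement of all
coefficients in degrees below `n`. -/
def orderIdeal (n : ℕ) : Ideal (MvPowerSeries σ R) where
  carrier := {f | n ≤ f.order}
  add_mem' hf hg := (le_min hf hg).trans min_order_le_add
  zero_mem' := by simp
  smul_mem' _ _ hf := (le_add_left hf).trans le_order_mul

theorem mem_orderIdeal : f ∈ orderIdeal σ R n ↔ n ≤ f.order := Iff.rfl

theorem mem_orderIdeal_iff_coeff :
    f ∈ orderIdeal σ R n ↔ ∀ m, m.degree < n → coeff m f = 0 :=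
  ⟨fun hf _ hm => coeff_of_lt_order ((Nat.cast_lt.mpr hm).trans_le hf), nat_le_order⟩

theorem smodEq_orderIdeal_iff_coeff :
    f ≡ g [SMOD orderIdeal σ R n] ↔ ∀ m, m.degree < n → coeff m f = coeff m g := by
  simp only [SModEq.sub_mem, mem_orderIdeal_iff_coeff, map_sub, sub_eq_zero]

theorem mem_orderIdeal_zero (f : MvPowerSeries σ R) : f ∈ orderIdeal σ R 0 :=
  mem_orderIdeal.mpr (by simp)

theorem mem_orderIdeal_one : f ∈ orderIdeal σ R 1 ↔ constantCoeff f = 0 := by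
  rw [mem_orderIdeal, Nat.cast_one, one_le_order_iff_constCoeff_eq_zero]

theorem orderIdeal_antitone : Antitone (orderIdeal σ R) :=
  fun _ _ h _ hf => mem_orderIdeal.mpr ((Nat.cast_le.mpr h).trans hf)

theorem mul_mem_orderIdeal (hf : f ∈ orderIdeal σ R a) (hg : g ∈ orderIdeal σ R b) :
    f * g ∈ orderIdeal σ R (a + b) := by
  rw [mem_orderIdeal, Nat.cast_add]
  exact (add_le_add hf hg).trans le_order_mul

theorem pow_mem_orderIdeal (hf : constantCoeff f = 0) (n : ℕ) : f ^ n ∈ orderIdeal σ R n :=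
  le_order_pow_of_constantCoeff_eq_zero n hf

theorem smul_mem_orderIdeal (c : R) (hf : f ∈ orderIdeal σ R n) : c • f ∈ orderIdeal σ R n :=
  hf.trans le_order_smul

theorem X_mul_mem_orderIdeal_succ_iff (i : σ) :
    X i * f ∈ orderIdeal σ R (n + 1) ↔ f ∈ orderIdeal σ R n := by
  refine ⟨fun h => mem_orderIdeal_iff_coeff.mpr fun m hm => ?_, fun h => ?_⟩
  · have h' := mem_orderIdeal_iff_coeff.mp h (Finsupp.single i 1 + m) (by simp; omega)
    rwa [X, coeff_add_monomial_mul, one_mul] at h'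
  · rw [add_comm]
    exact mul_mem_orderIdeal (mem_orderIdeal_one.mpr (constantCoeff_X i)) h

theorem eq_of_forall_smodEq_orderIdeal (h : ∀ n, f ≡ g [SMOD orderIdeal σ R n]) : f = g :=
  ext fun m => smodEq_orderIdeal_iff_coeff.mp (h _) m m.degree.lt_succ_self

theorem X_mul_X_dvd {i j : σ} (hij : i ≠ j) (hi : X i ∣ f) (hj : X j ∣ f) : X i * X j ∣ f := by
  obtain ⟨g, rfl⟩ := hi
  refine mul_dvd_mul_left _ (X_dvd_iff.mpr fun m hm => ?_)
  have h := X_dvd_iff.mp hj (Finsupp.single i 1 + m) (by simp [hm, hij])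
  rwa [X, coeff_add_monomial_mul, one_mul] at h

end OrderIdeal

section OrderSum

open MvPowerSeries

variable {σ R : Type*} [CommRing R] {s t : ℕ → MvPowerSeries σ R}

/-- The sum `∑ t n` of a family whose `n`-th term has order at least `n`, so that only the terms
with `n ≤ deg m` contribute to the coefficient at `m`. It is a junk value for other families. -/
def orderSum (t : ℕ → MvPowerSeries σ R) : MvPowerSeries σ R :=
  fun m => ∑ n ∈ Finset.range (m.degree + 1), coeff m (t n)

theorem coeff_orderSum (t : ℕ → MvPowerSeries σ R) (m : σ →₀ ℕ) :
    coeff m (orderSum t) = ∑ n ∈ Finset.range (m.degree + 1), coeff m (t n) := rfl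

theorem coeff_orderSum_eq_sum_range (ht : ∀ n, t n ∈ orderIdeal σ R n) {m : σ →₀ ℕ} {N : ℕ}
    (hN : ∀ n ≥ N, coeff m (t n) = 0) :
    coeff m (orderSum t) = ∑ n ∈ Finset.range N, coeff m (t n) := by
  rw [coeff_orderSum]
  rcases le_total N (m.degree + 1) with h | h
  · exact Finset.eventually_constant_sum hN h
  · exact (Finset.eventually_constant_sum
      (fun n hn => mem_orderIdeal_iff_coeff.mp (ht n) m hn) h).symm

theorem orderSum_smodEq_sum_range (ht : ∀ n, t n ∈ orderIdeal σ R n) {N k : ℕ}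
    (hN : ∀ n ≥ N, t n ∈ orderIdeal σ R k) :
    orderSum t ≡ ∑ n ∈ Finset.range N, t n [SMOD orderIdeal σ R k] := by
  refine smodEq_orderIdeal_iff_coeff.mpr fun m hm => ?_
  rw [map_sum]
  exact coeff_orderSum_eq_sum_range ht fun n hn => mem_orderIdeal_iff_coeff.mp (hN n hn) m hm

theorem orderSum_smodEq {n : ℕ} (h : ∀ k, s k ≡ t k [SMOD orderIdeal σ R n]) :
    orderSum s ≡ orderSum t [SMOD orderIdeal σ R n] :=
  smodEq_orderIdeal_iff_coeff.mpr fun m hm => by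
    simp only [coeff_orderSum, smodEq_orderIdeal_iff_coeff.mp (h _) m hm]

theorem orderSum_sub (s t : ℕ → MvPowerSeries σ R) :
    orderSum s - orderSum t = orderSum fun n => s n - t n := by
  ext m
  simp only [map_sub, coeff_orderSum, Finset.sum_sub_distrib]

theorem X_dvd_orderSum {i : σ} (h : ∀ n, X i ∣ t n) : X i ∣ orderSum t :=
  X_dvd_iff.mpr fun m hm => by
    simp only [coeff_orderSum, X_dvd_iff.mp (h _) m hm, Finset.sum_const_zero]

theorem orderSum_eq_add_mul {a : MvPowerSeries σ R} (ha : constantCoeff a = 0)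
    (ht : ∀ n, t n ∈ orderIdeal σ R n) (h : ∀ n, s (n + 1) = a * t n) :
    orderSum s = s 0 + a * orderSum t := by
  have hs : ∀ n, s n ∈ orderIdeal σ R n
    | 0 => mem_orderIdeal_zero _
    | n + 1 => by
      rw [h, add_comm]
      exact mul_mem_orderIdeal (mem_orderIdeal_one.mpr ha) (ht n)
  refine eq_of_forall_smodEq_orderIdeal fun N => ?_
  calc orderSum s
      ≡ ∑ n ∈ Finset.range (N + 1), s n [SMOD orderIdeal σ R N] :=
        orderSum_smodEq_sum_range hs fun n hn => orderIdeal_antitone (by omega) (hs n)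
    _ = s 0 + a * ∑ n ∈ Finset.range N, t n := by
        rw [Finset.sum_range_succ', add_comm, Finset.mul_sum]
        simp only [h]
    _ ≡ s 0 + a * orderSum t [SMOD orderIdeal σ R N] :=
        .add .rfl (.mul .rfl (orderSum_smodEq_sum_range ht
          fun n hn => orderIdeal_antitone hn (ht n)).symm)

end OrderSum

section OrderLipschitz

open MvPowerSeries

variable {σ R : Type*} [CommRing R] {Φ Ψ : MvPowerSeries σ R → MvPowerSeries σ R} {k l : ℕ}

/-- A self-map of the power series ring that raises the order of agreement of its arguments by at
least `k`, i.e. has Lipschitz constant `2 ^ (-k)` for the distance `2 ^ (-order (F - G))`. -/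
def OrderLipschitz (k : ℕ) (Ψ : MvPowerSeries σ R → MvPowerSeries σ R) : Prop :=
  ∀ n F G, F ≡ G [SMOD orderIdeal σ R n] → Ψ F ≡ Ψ G [SMOD orderIdeal σ R (n + k)]

namespace OrderLipschitz

protected theorem id : OrderLipschitz 0 fun F : MvPowerSeries σ R => F := fun _ _ _ h => h

theorem const (f : MvPowerSeries σ R) : OrderLipschitz k fun _ => f := fun _ _ _ _ => .rfl

theorem mono (hΨ : OrderLipschitz k Ψ) (h : l ≤ k) : OrderLipschitz l Ψ :=
  fun n F G hFG => (hΨ n F G hFG).mono (orderIdeal_antitone (by omega))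

theorem add (hΦ : OrderLipschitz k Φ) (hΨ : OrderLipschitz k Ψ) :
    OrderLipschitz k fun F => Φ F + Ψ F :=
  fun n F G h => (hΦ n F G h).add (hΨ n F G h)

theorem sub (hΦ : OrderLipschitz k Φ) (hΨ : OrderLipschitz k Ψ) :
    OrderLipschitz k fun F => Φ F - Ψ F :=
  fun n F G h => (hΦ n F G h).sub (hΨ n F G h)

theorem pow (hΨ : OrderLipschitz k Ψ) (e : ℕ) : OrderLipschitz k fun F => Ψ F ^ e :=
  fun n F G h => (hΨ n F G h).pow e

theorem const_mul {f : MvPowerSeries σ R} (hf : f ∈ orderIdeal σ R l)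
    (hΨ : OrderLipschitz k Ψ) : OrderLipschitz (k + l) fun F => f * Ψ F := by
  intro n F G h
  rw [SModEq.sub_mem, ← mul_sub, mul_comm, ← add_assoc]
  exact mul_mem_orderIdeal (SModEq.sub_mem.mp (hΨ n F G h)) hf

theorem iterate_smodEq (hΨ : OrderLipschitz 1 Ψ) (F G : MvPowerSeries σ R) (n : ℕ) :
    Ψ^[n] F ≡ Ψ^[n] G [SMOD orderIdeal σ R n] := by
  induction n with
  | zero => exact SModEq.sub_mem.mpr (mem_orderIdeal_zero _)
  | succ n ih =>
    rw [Function.iterate_succ_apply', Function.iterate_succ_apply']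
    exact hΨ n _ _ ih

theorem exists_isFixedPt (hΨ : OrderLipschitz 1 Ψ) : ∃ F, Function.IsFixedPt Ψ F := by
  let L : MvPowerSeries σ R := fun m => coeff m (Ψ^[m.degree + 1] 0)
  have hL (n : ℕ) : L ≡ Ψ^[n] 0 [SMOD orderIdeal σ R n] := by
    refine smodEq_orderIdeal_iff_coeff.mpr fun m hm => ?_
    obtain ⟨j, rfl⟩ := Nat.exists_eq_add_of_le (Nat.succ_le_of_lt hm)
    rw [Function.iterate_add_apply]
    exact smodEq_orderIdeal_iff_coeff.mp (hΨ.iterate_smodEq _ _ _) m m.degree.lt_succ_self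
  refine ⟨L, eq_of_forall_smodEq_orderIdeal fun n => ?_⟩
  have hΨL := hΨ n _ _ (hL n)
  rw [← Function.iterate_succ_apply' Ψ] at hΨL
  exact (hΨL.trans (hL (n + 1)).symm).mono (orderIdeal_antitone n.le_succ)

theorem existsUnique_isFixedPt (hΨ : OrderLipschitz 1 Ψ) : ∃! F, Function.IsFixedPt Ψ F := by
  obtain ⟨F, hF⟩ := hΨ.exists_isFixedPt
  refine ⟨F, hF, fun G hG => eq_of_forall_smodEq_orderIdeal fun n => ?_⟩
  simpa only [(hF.iterate n).eq, (hG.iterate n).eq] using hΨ.iterate_smodEq G F n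

theorem bijective_of_sub_mul {u : MvPowerSeries σ R} (hu : IsUnit u)
    (hΦ : OrderLipschitz 1 fun F => Φ F - u * F) : Function.Bijective Φ := by
  obtain ⟨u, rfl⟩ := hu
  refine (Function.bijective_iff_existsUnique Φ).mpr fun M => ?_
  have hΨ : OrderLipschitz 1 fun F => ↑u⁻¹ * (M - (Φ F - u * F)) :=
    ((const M).sub hΦ).const_mul (l := 0) (mem_orderIdeal_zero _)
  refine (existsUnique_congr fun F => ?_).mp hΨ.existsUnique_isFixedPt
  rw [Function.IsFixedPt, Units.inv_mul_eq_iff_eq_mul, sub_eq_iff_eq_add, add_sub_cancel, eq_comm]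

end OrderLipschitz

end OrderLipschitz

section HyperbolicSeries

open MvPowerSeries

variable {σ R : Type*} [CommRing R] {K : MvPowerSeries σ R}

/-- The series `∑ c n • (F ^ e n * K ^ n)`, the common shape of `Cosh`, `Sinh` and their tails. -/
def hyperbolicSeries (c : ℕ → R) (e : ℕ → ℕ) (K F : MvPowerSeries σ R) : MvPowerSeries σ R :=
  orderSum fun n => c n • (F ^ e n * K ^ n)

theorem hyperbolicSeries_eq_add_mul (hK : constantCoeff K = 0) (c : ℕ → R) (e : ℕ → ℕ)
    (F : MvPowerSeries σ R) :
    hyperbolicSeries c e K F = c 0 • F ^ e 0 +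
      K * hyperbolicSeries (fun n => c (n + 1)) (fun n => e (n + 1)) K F := by
  have h := orderSum_eq_add_mul (s := fun n => c n • (F ^ e n * K ^ n))
    (t := fun n => c (n + 1) • (F ^ e (n + 1) * K ^ n)) hK
    (fun n => smul_mem_orderIdeal _ (Ideal.mul_mem_left _ _ (pow_mem_orderIdeal hK n)))
    fun n => by rw [mul_smul_comm, pow_succ', mul_left_comm]
  simpa only [pow_zero, mul_one] using! h

theorem orderLipschitz_hyperbolicSeries (c : ℕ → R) (e : ℕ → ℕ) (K : MvPowerSeries σ R) :
    OrderLipschitz 0 (hyperbolicSeries c e K) := by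
  intro n F G h
  refine orderSum_smodEq fun k => ?_
  simp only [smul_eq_C_mul]
  exact .mul .rfl ((h.pow _).mul .rfl)

end HyperbolicSeries

section Phi

open MvPowerSeries

variable {f g h : R3}

theorem phi3_eq_orderSum (g : R3) :
    phi3 g = orderSum fun n => ((4 : ℚ) ^ n * (2 * n + 1).factorial)⁻¹ • g ^ (2 * n) := rfl

theorem phi3_smodEq (hg : constantCoeff g = 0) :
    phi3 g ≡ 1 + (1 / 24 : ℚ) • g ^ 2 [SMOD orderIdeal (Fin 3) ℚ 4] := by
  have ht (n : ℕ) : ((4 : ℚ) ^ n * (2 * n + 1).factorial)⁻¹ • g ^ (2 * n) ∈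
      orderIdeal (Fin 3) ℚ (2 * n) := smul_mem_orderIdeal _ (pow_mem_orderIdeal hg _)
  rw [phi3_eq_orderSum]
  convert orderSum_smodEq_sum_range (N := 2) (k := 4)
    (fun n => orderIdeal_antitone (by omega) (ht n))
    (fun n hn => orderIdeal_antitone (by omega) (ht n)) using 1
  simp only [Finset.sum_range_succ]
  norm_num [Nat.factorial]

theorem constantCoeff_phi3 (hg : constantCoeff g = 0) : constantCoeff (phi3 g) = 1 := by
  simpa [hg] using smodEq_orderIdeal_iff_coeff.mp (phi3_smodEq hg) 0 (by simp)

theorem isUnit_phi3 (hg : constantCoeff g = 0) : IsUnit (phi3 g) := by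
  rw [isUnit_iff_constantCoeff, constantCoeff_phi3 hg]
  exact isUnit_one

theorem phi3_mul_phi3_smodEq (hf : constantCoeff f = 0) (hg : constantCoeff g = 0) :
    phi3 f * phi3 g ≡ 1 + (1 / 24 : ℚ) • (f ^ 2 + g ^ 2) [SMOD orderIdeal (Fin 3) ℚ 4] := by
  refine ((phi3_smodEq hf).mul (phi3_smodEq hg)).trans (SModEq.sub_mem.mpr ?_)
  have hfg : (1 / 24 : ℚ) • f ^ 2 * (1 / 24 : ℚ) • g ^ 2 ∈ orderIdeal (Fin 3) ℚ (2 + 2) :=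
    mul_mem_orderIdeal (smul_mem_orderIdeal _ (pow_mem_orderIdeal hf 2))
      (smul_mem_orderIdeal _ (pow_mem_orderIdeal hg 2))
  convert hfg using 1
  rw [smul_add]
  ring

theorem phi3_mul_phi3_sub_smodEq (hf : constantCoeff f = 0) (hg : constantCoeff g = 0)
    (hh : constantCoeff h = 0) :
    phi3 g * phi3 (f + g + h) - phi3 (f + g) * phi3 (g + h) ≡ (1 / 12 : ℚ) • (f * h)
      [SMOD orderIdeal (Fin 3) ℚ 4] := by
  convert (phi3_mul_phi3_smodEq hg (by simp [hf, hg, hh] : constantCoeff (f + g + h) = 0)).sub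
    (phi3_mul_phi3_smodEq (by simp [hf, hg] : constantCoeff (f + g) = 0)
      (by simp [hg, hh] : constantCoeff (g + h) = 0)) using 1
  rw [add_sub_add_left_eq_sub, ← smul_sub, show (1 / 12 : ℚ) = 1 / 24 * 2 by norm_num, mul_smul,
    ofNat_smul_eq_nsmul]
  congr 1
  ring

theorem X_dvd_phi3_sub_phi3 {i : Fin 3} (hfg : X i ∣ f - g) : X i ∣ phi3 f - phi3 g := by
  have hpow (n : ℕ) : X i ∣ f ^ n - g ^ n := hfg.trans (sub_dvd_pow_sub_pow f g n)
  rw [phi3_eq_orderSum, phi3_eq_orderSum, orderSum_sub]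
  refine X_dvd_orderSum fun n => ?_
  rw [← smul_sub, smul_eq_C_mul]
  exact (hpow _).mul_left _

theorem X_mul_X_dvd_phi3_mul_phi3_sub {i j : Fin 3} (hij : i ≠ j) (g : R3) :
    X i * X j ∣ phi3 g * phi3 (X i + g + X j) - phi3 (X i + g) * phi3 (g + X j) := by
  apply X_mul_X_dvd hij
  · have h₁ : X i ∣ phi3 (X i + g + X j) - phi3 (g + X j) :=
      X_dvd_phi3_sub_phi3 (by simp [add_assoc])
    have h₂ : X i ∣ phi3 (X i + g) - phi3 g := X_dvd_phi3_sub_phi3 (by simp)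
    convert dvd_sub (h₁.mul_left (phi3 g)) (h₂.mul_right (phi3 (g + X j))) using 1
    ring
  · have h₁ : X j ∣ phi3 (X i + g + X j) - phi3 (X i + g) := X_dvd_phi3_sub_phi3 (by simp)
    have h₂ : X j ∣ phi3 (g + X j) - phi3 g := X_dvd_phi3_sub_phi3 (by simp)
    convert dvd_sub (h₁.mul_left (phi3 g)) (h₂.mul_left (phi3 (X i + g))) using 1
    ring

theorem exists_phi3_mul_phi3_eq {i j : Fin 3} (hij : i ≠ j) (hg : constantCoeff g = 0) :
    ∃ Q, constantCoeff Q = 1 / 12 ∧ phi3 g * phi3 (X i + g + X j) =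
      phi3 (X i + g) * phi3 (g + X j) * (1 + X i * X j * Q) := by
  obtain ⟨N, hN⟩ := X_mul_X_dvd_phi3_mul_phi3_sub hij g
  have hN0 : constantCoeff N = 1 / 12 := by
    have h := SModEq.sub_mem.mp
      (phi3_mul_phi3_sub_smodEq (constantCoeff_X i) hg (constantCoeff_X j))
    rw [hN, smul_eq_C_mul, mul_comm (C _), ← mul_sub, mul_assoc, X_mul_mem_orderIdeal_succ_iff,
      X_mul_mem_orderIdeal_succ_iff] at h
    simpa [sub_eq_zero] using mem_orderIdeal_iff_coeff.mp h 0 (by simp)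
  have hi : constantCoeff (X i + g) = 0 := by simp [hg]
  have hj : constantCoeff (g + X j) = 0 := by simp [hg]
  have hU : constantCoeff (phi3 (X i + g) * phi3 (g + X j)) = 1 := by
    rw [map_mul, constantCoeff_phi3 hi, constantCoeff_phi3 hj, one_mul]
  set U := phi3 (X i + g) * phi3 (g + X j)
  have hUinv : U * U⁻¹ = 1 := MvPowerSeries.mul_inv_cancel U (by simp [hU])
  refine ⟨U⁻¹ * N, by simp [hU, hN0], ?_⟩
  linear_combination hN - X i * X j * N * hUinv

end Phi

section CoshSinh

open MvPowerSeries

theorem constantCoeff_d (i : Fin 3) : constantCoeff (d i) = 0 := constantCoeff_X i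

theorem isRegular_d (i : Fin 3) : IsRegular (d i) :=
  isRegular_iff_mem_nonZeroDivisors.mpr X_mem_nonzeroDivisors

theorem constantCoeff_K3 : constantCoeff K3 = 0 := by simp [K3, constantCoeff_d]

/-- The series `(Cosh F - 1) / K`. -/
def coshTail (F : R3) : R3 :=
  hyperbolicSeries (fun n => ((2 * (n + 1)).factorial : ℚ)⁻¹) (fun n => 2 * (n + 1)) K3 F

/-- The series `(Sinh F - F) / K`. -/
def sinhTail (F : R3) : R3 :=
  hyperbolicSeries (fun n => ((2 * (n + 1) + 1).factorial : ℚ)⁻¹) (fun n => 2 * (n + 1) + 1) K3 F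

theorem Cosh_eq_hyperbolicSeries (F : R3) : Cosh F =
    hyperbolicSeries (fun n => ((2 * n).factorial : ℚ)⁻¹) (fun n => 2 * n) K3 F := rfl

theorem Sinh_eq_hyperbolicSeries (F : R3) : Sinh F =
    hyperbolicSeries (fun n => ((2 * n + 1).factorial : ℚ)⁻¹) (fun n => 2 * n + 1) K3 F := rfl

theorem Cosh_eq_one_add (F : R3) : Cosh F = 1 + K3 * coshTail F := by
  rw [Cosh_eq_hyperbolicSeries, hyperbolicSeries_eq_add_mul constantCoeff_K3, coshTail]
  simp

theorem Sinh_eq_self_add (F : R3) : Sinh F = F + K3 * sinhTail F := by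
  rw [Sinh_eq_hyperbolicSeries, hyperbolicSeries_eq_add_mul constantCoeff_K3, sinhTail]
  simp

/-- The series `(Cosh F + d₁d₃ Sinh F - 1) / (d₁d₃)`, a perturbation of `F` by terms of higher
order. The division is possible because `d₁d₃` divides `K`. -/
def coshSinhQuotient (F : R3) : R3 :=
  F + K3 * sinhTail F - d 1 * (d 0 + d 1 + d 2) * coshTail F

theorem Cosh_add_mul_Sinh_eq (F : R3) :
    Cosh F + d 0 * d 2 * Sinh F = 1 + d 0 * d 2 * coshSinhQuotient F := by
  rw [Cosh_eq_one_add, Sinh_eq_self_add, coshSinhQuotient, K3]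
  ring

theorem constantCoeff_coshSinhQuotient (F : R3) :
    constantCoeff (coshSinhQuotient F) = constantCoeff F := by
  simp [coshSinhQuotient, constantCoeff_K3, constantCoeff_d]

theorem orderLipschitz_coshSinhQuotient_sub_self :
    OrderLipschitz 1 fun F => coshSinhQuotient F - F := by
  have hb : d 1 * (d 0 + d 1 + d 2) ∈ orderIdeal (Fin 3) ℚ 1 :=
    mem_orderIdeal_one.mpr (by simp [constantCoeff_d])
  have hcosh : OrderLipschitz 0 coshTail := orderLipschitz_hyperbolicSeries _ _ _
  have hsinh : OrderLipschitz 0 sinhTail := orderLipschitz_hyperbolicSeries _ _ _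
  convert (hsinh.const_mul (mem_orderIdeal_one.mpr constantCoeff_K3)).sub
    (hcosh.const_mul hb) using 2 with F
  rw [coshSinhQuotient, add_sub_assoc, add_sub_cancel_left]

theorem orderLipschitz_coshSinhQuotient : OrderLipschitz 0 coshSinhQuotient := by
  simpa using (orderLipschitz_coshSinhQuotient_sub_self.mono zero_le).add .id

theorem bijective_two_mul_add_mul_sq_coshSinhQuotient {a : R3} (ha : constantCoeff a = 0) :
    Function.Bijective fun F => 2 * coshSinhQuotient F + a * coshSinhQuotient F ^ 2 := by
  have h2 : IsUnit (2 : R3) := isUnit_iff_constantCoeff.mpr (by simp [map_ofNat constantCoeff])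
  refine OrderLipschitz.bijective_of_sub_mul h2 ?_
  have hlin := orderLipschitz_coshSinhQuotient_sub_self.const_mul (mem_orderIdeal_zero 2)
  have hsq := (orderLipschitz_coshSinhQuotient.pow 2).const_mul (mem_orderIdeal_one.mpr ha)
  convert hlin.add hsq using 2 with F
  ring

end CoshSinh

theorem one_add_mul_sq_mul_eq_iff {A : Type*} [CommRing A] {u a t q : A}
    (h : IsLeftRegular (u * a)) :
    (1 + a * t) ^ 2 * u = u * (1 + a * q) ↔ 2 * t + a * t ^ 2 = q := by
  rw [← h.eq_iff (a := 2 * t + a * t ^ 2)]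
  constructor <;> intro h' <;> linear_combination h'

theorem stmt0 :
    (∃! F : R3, (Cosh F + d 0 * d 2 * Sinh F)^2 * phi3 (d 0 + d 1) * phi3 (d 1 + d 2)
        = phi3 (d 1) * phi3 (d 0 + d 1 + d 2)) ∧
    (∀ F : R3, (Cosh F + d 0 * d 2 * Sinh F)^2 * phi3 (d 0 + d 1) * phi3 (d 1 + d 2)
        = phi3 (d 1) * phi3 (d 0 + d 1 + d 2) →
      MvPowerSeries.constantCoeff (σ := Fin 3) (R := ℚ) F = 1/24) := by
  have hd := constantCoeff_d
  obtain ⟨Q, hQ0, hQ⟩ : ∃ Q, MvPowerSeries.constantCoeff Q = 1 / 12 ∧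
      phi3 (d 1) * phi3 (d 0 + d 1 + d 2) =
        phi3 (d 0 + d 1) * phi3 (d 1 + d 2) * (1 + d 0 * d 2 * Q) :=
    exists_phi3_mul_phi3_eq (by decide) (hd 1)
  have hU : IsUnit (phi3 (d 0 + d 1) * phi3 (d 1 + d 2)) :=
    (isUnit_phi3 (by simp [hd])).mul (isUnit_phi3 (by simp [hd]))
  have hreg := hU.isRegular.left.mul ((isRegular_d 0).mul (isRegular_d 2)).left
  have hiff (F : R3) := one_add_mul_sq_mul_eq_iff (t := coshSinhQuotient F) (q := Q) hreg
  simp only [Cosh_add_mul_Sinh_eq, mul_assoc (_ ^ 2), hQ, hiff]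
  refine ⟨(bijective_two_mul_add_mul_sq_coshSinhQuotient (by simp [hd])).existsUnique Q,
    fun F hF => ?_⟩
  have h0 : 2 * MvPowerSeries.constantCoeff F = 1 / 12 := by
    simpa [hd, constantCoeff_coshSinhQuotient, hQ0, map_ofNat MvPowerSeries.constantCoeff] using
      congrArg MvPowerSeries.constantCoeff hF
  linarith
end
end

section
/- Equation (21) has a unique solution: there exists exactly one Ψ ∈ ℚ[[u,v]] such that Σ_{n≥0} Ψ^{2n}·(uv)^n/(2n)! + Σ_{n≥0} Ψ^{2n+1}·u^{n+1}·v^n/(2n+1)! = 1 + u. -/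
noncomputable section

abbrev R2 := MvPowerSeries (Fin 2) ℚ

def u : R2 := MvPowerSeries.X 0
def v : R2 := MvPowerSeries.X 1

/-- Σ_{n≥0} Ψ^{2n}·(uv)^n/(2n)!  (coefficientwise finite sum) -/
def S1 (P : R2) : R2 := fun m => ∑ n ∈ Finset.range (mdeg m + 1),
  MvPowerSeries.coeff m ((((2*n).factorial : ℚ))⁻¹ • (P ^ (2*n) * (u * v) ^ n))

/-- Σ_{n≥0} Ψ^{2n+1}·u^{n+1}·v^n/(2n+1)!  (coefficientwise finite sum) -/
def S2 (P : R2) : R2 := fun m => ∑ n ∈ Finset.range (mdeg m + 1),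
  MvPowerSeries.coeff m ((((2*n+1).factorial : ℚ))⁻¹ • (P ^ (2*n+1) * u ^ (n+1) * v ^ n))

/-- equation (21): cosh(Ψ√(uv)) + √(u/v)·sinh(Ψ√(uv)) = 1 + u, expanded -/
def Eq21 (P : R2) : Prop := S1 P + S2 P = 1 + u

/-!
Put `w 0, w 1, w 2, … = 1, u, uv, u²v, u²v², …`. The even and odd parts of `∑ w k * Ψ ^ k / k!`
are the two sums of equation (21), and `w (k + 2) = u * v * w k`. Splitting off the terms
`k = 0, 1` and cancelling `u` turns the equation into `Ψ = 1 - v * G Ψ` with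
`G Ψ = Ψ ^ 2 * ∑ w k * Ψ ^ k / (k + 2)!`. Since `P - Q ∣ G P - G Q`, the map `Ψ ↦ 1 - v * G Ψ`
raises the order of differences by at least one, so it has exactly one fixed point.
-/

open Filter MvPowerSeries
open scoped ENat Topology MvPowerSeries.WithPiTopology

section FixedPoint

variable {σ R : Type*}

theorem eq_of_forall_le_order_sub [Ring R] {P Q : MvPowerSeries σ R}
    (h : ∀ n : ℕ, (n : ℕ∞) ≤ (P - Q).order) : P = Q :=
  sub_eq_zero.1 (order_eq_top_iff.1 (ENat.eq_top_iff_forall_ge.2 h))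

theorem le_order_iterate_sub_iterate [Ring R] {f : MvPowerSeries σ R → MvPowerSeries σ R}
    (hf : ∀ P Q, (P - Q).order + 1 ≤ (f P - f Q).order) (n : ℕ) (P Q : MvPowerSeries σ R) :
    (n : ℕ∞) ≤ (f^[n] P - f^[n] Q).order := by
  induction n with
  | zero => exact zero_le
  | succ n ih =>
    rw [Function.iterate_succ_apply', Function.iterate_succ_apply', Nat.cast_succ]
    exact (add_le_add_left ih 1).trans (hf _ _)

theorem exists_forall_le_order_sub_iterate [Ring R] {f : MvPowerSeries σ R → MvPowerSeries σ R}
    (hf : ∀ P Q, (P - Q).order + 1 ≤ (f P - f Q).order) (P : MvPowerSeries σ R) :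
    ∃ L, ∀ n : ℕ, (n : ℕ∞) ≤ (L - f^[n] P).order := by
  let L : MvPowerSeries σ R := fun m => coeff m (f^[m.degree + 1] P)
  refine ⟨L, fun n => nat_le_order fun m hm => ?_⟩
  obtain ⟨j, rfl⟩ := Nat.exists_eq_add_of_le (Nat.succ_le_of_lt hm)
  have hL : coeff m L = coeff m (f^[m.degree + 1] P) := coeff_apply L m
  rw [map_sub, hL, ← map_sub, Function.iterate_add_apply f (m.degree + 1) j]
  exact coeff_of_lt_order <|
    (Nat.cast_lt.2 m.degree.lt_succ_self).trans_le (le_order_iterate_sub_iterate hf _ _ _)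

theorem existsUnique_isFixedPt_of_order_sub [Ring R] {f : MvPowerSeries σ R → MvPowerSeries σ R}
    (hf : ∀ P Q, (P - Q).order + 1 ≤ (f P - f Q).order) : ∃! P, Function.IsFixedPt f P := by
  obtain ⟨L, hL⟩ := exists_forall_le_order_sub_iterate hf 0
  have hfL : Function.IsFixedPt f L := eq_of_forall_le_order_sub fun n => by
    have hstep : (n : ℕ∞) ≤ (f L - f^[n + 1] 0).order := by
      rw [Function.iterate_succ_apply']
      exact ((hL n).trans le_self_add).trans (hf _ _)
    have hnext : (n : ℕ∞) ≤ (f^[n + 1] 0 - L).order := by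
      rw [← neg_sub, order_neg]
      exact (Nat.cast_le.2 n.le_succ).trans (hL (n + 1))
    rw [← sub_add_sub_cancel (f L) (f^[n + 1] 0) L]
    exact (le_min hstep hnext).trans min_order_le_add
  refine ⟨L, hfL, fun Q hQ => eq_of_forall_le_order_sub fun n => ?_⟩
  rw [← (hQ.iterate n).eq, ← (hfL.iterate n).eq]
  exact le_order_iterate_sub_iterate hf n Q L

theorem existsUnique_eq_sub_mul_of_sub_dvd [CommRing R] {w : MvPowerSeries σ R}
    (hw : constantCoeff w = 0) {g : MvPowerSeries σ R → MvPowerSeries σ R}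
    (hg : ∀ P Q, P - Q ∣ g P - g Q) (c : MvPowerSeries σ R) : ∃! P, P = c - w * g P := by
  suffices h : ∃! P, Function.IsFixedPt (fun P => c - w * g P) P by
    simpa only [Function.IsFixedPt, eq_comm] using h
  refine existsUnique_isFixedPt_of_order_sub fun P Q => ?_
  obtain ⟨h, hh⟩ := hg P Q
  have hfactor : c - w * g P - (c - w * g Q) = -((P - Q) * w * h) := by
    linear_combination -w * hh
  calc (P - Q).order + 1
      ≤ (P - Q).order + w.order := by
        gcongr
        exact one_le_order_iff_constCoeff_eq_zero.2 hw
    _ ≤ ((P - Q) * w).order := le_order_mul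
    _ ≤ ((P - Q) * w * h).order := le_self_add.trans le_order_mul
    _ = (c - w * g P - (c - w * g Q)).order := by rw [hfactor, order_neg]

end FixedPoint

section Series

variable {σ R : Type*} [CommRing R] [TopologicalSpace R]

theorem hasSum_of_coeff_eq_sum_range_coeff {F : ℕ → MvPowerSeries σ R} {S : MvPowerSeries σ R}
    (hF : ∀ n : ℕ, (n : ℕ∞) ≤ (F n).order)
    (hS : ∀ m, coeff m S = ∑ n ∈ Finset.range (m.degree + 1), coeff m (F n)) : HasSum F S := by
  refine WithPiTopology.hasSum_iff_hasSum_coeff.2 fun m => ?_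
  rw [hS]
  refine hasSum_sum_of_ne_finset_zero fun n hn => ?_
  rw [Finset.mem_range, Nat.lt_succ_iff, not_le] at hn
  exact coeff_of_lt_order ((Nat.cast_lt.2 hn).trans_le (hF n))

theorem summable_mul_of_tendsto_order {a : ℕ → MvPowerSeries σ R}
    (ha : Tendsto (fun k => (a k).order) atTop (𝓝 ⊤)) (b : ℕ → MvPowerSeries σ R) :
    Summable fun k => a k * b k :=
  WithPiTopology.summable_of_tendsto_order_atTop_nhds_top <|
    tendsto_nhds_top_mono' ha fun _ => le_self_add.trans le_order_mul

theorem sub_dvd_tsum_mul_pow_sub [IsTopologicalRing R] [T2Space R] {a : ℕ → MvPowerSeries σ R}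
    (ha : Tendsto (fun k => (a k).order) atTop (𝓝 ⊤)) (P Q : MvPowerSeries σ R) :
    P - Q ∣ ∑' k, a k * P ^ k - ∑' k, a k * Q ^ k := by
  choose h hh using sub_dvd_pow_sub_pow P Q
  refine ⟨∑' k, a k * h k, ?_⟩
  rw [← (summable_mul_of_tendsto_order ha _).tsum_sub (summable_mul_of_tendsto_order ha _),
    ← (summable_mul_of_tendsto_order ha h).tsum_mul_left]
  refine tsum_congr fun k => ?_
  rw [← mul_sub, hh, mul_left_comm]

end Series

section AlternatingSeries

variable {σ R : Type*} [CommRing R]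

/-- The product of the first `k` factors of `X s * X t * X s * X t * ⋯`: the monomial that
accompanies `Ψ ^ k` in equation (21), for `u = X s` and `v = X t`. -/
def alternatingMonomial (s t : σ) (k : ℕ) : MvPowerSeries σ R :=
  X s ^ ((k + 1) / 2) * X t ^ (k / 2)

theorem alternatingMonomial_two_mul (s t : σ) (n : ℕ) :
    alternatingMonomial s t (2 * n) = (X s ^ n * X t ^ n : MvPowerSeries σ R) := by
  rw [alternatingMonomial, show (2 * n + 1) / 2 = n by lia, show 2 * n / 2 = n by lia]

theorem alternatingMonomial_two_mul_add_one (s t : σ) (n : ℕ) :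
    alternatingMonomial s t (2 * n + 1) = (X s ^ (n + 1) * X t ^ n : MvPowerSeries σ R) := by
  rw [alternatingMonomial, show (2 * n + 1 + 1) / 2 = n + 1 by lia,
    show (2 * n + 1) / 2 = n by lia]

theorem alternatingMonomial_add_two (s t : σ) (k : ℕ) :
    alternatingMonomial s t (k + 2) =
      (X s * X t * alternatingMonomial s t k : MvPowerSeries σ R) := by
  rw [alternatingMonomial, alternatingMonomial, show (k + 2 + 1) / 2 = (k + 1) / 2 + 1 by lia,
    show (k + 2) / 2 = k / 2 + 1 by lia]
  ring

theorem le_order_alternatingMonomial (s t : σ) (k : ℕ) :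
    (k : ℕ∞) ≤ (alternatingMonomial s t k : MvPowerSeries σ R).order :=
  calc (k : ℕ∞) = ((k + 1) / 2 : ℕ) + (k / 2 : ℕ) := by norm_cast; lia
    _ ≤ (X s ^ ((k + 1) / 2) : MvPowerSeries σ R).order + (X t ^ (k / 2)).order :=
      add_le_add (le_order_pow_of_constantCoeff_eq_zero _ (constantCoeff_X s))
        (le_order_pow_of_constantCoeff_eq_zero _ (constantCoeff_X t))
    _ ≤ (alternatingMonomial s t k).order := le_order_mul

theorem le_order_C_mul_alternatingMonomial (s t : σ) (c : R) (k : ℕ) :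
    (k : ℕ∞) ≤ (C c * alternatingMonomial s t k).order :=
  (le_order_alternatingMonomial s t k).trans (le_add_self.trans le_order_mul)

theorem tendsto_order_C_mul_alternatingMonomial (s t : σ) (a : ℕ → R) :
    Tendsto (fun k => (C (a k) * alternatingMonomial s t k).order) atTop (𝓝 ⊤) :=
  tendsto_nhds_top_mono' ENat.tendsto_natCast_nhds_top fun k =>
    le_order_C_mul_alternatingMonomial s t (a k) k

variable [TopologicalSpace R]

/-- The common shape of the left-hand sides of equation (21):
`a 0 + a 1 * u * P + a 2 * u * v * P ^ 2 + a 3 * u ^ 2 * v * P ^ 3 + ⋯`, for `u = X s` and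
`v = X t`. Equation (21) has `a k = 1 / k!`. Each coefficient of the sum has finitely many nonzero
contributions, so every Hausdorff topology on `R` gives the same value. -/
def alternatingSeries (s t : σ) (a : ℕ → R) (P : MvPowerSeries σ R) : MvPowerSeries σ R :=
  ∑' k, C (a k) * alternatingMonomial s t k * P ^ k

variable [IsTopologicalRing R] [T2Space R]

theorem sub_dvd_alternatingSeries_sub (s t : σ) (a : ℕ → R) (P Q : MvPowerSeries σ R) :
    P - Q ∣ alternatingSeries s t a P - alternatingSeries s t a Q :=
  sub_dvd_tsum_mul_pow_sub (tendsto_order_C_mul_alternatingMonomial s t a) P Q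

theorem alternatingSeries_eq_add_X_mul (s t : σ) (a : ℕ → R) (P : MvPowerSeries σ R) :
    alternatingSeries s t a P = C (a 0) + X s *
      (C (a 1) * P + X t * (P ^ 2 * alternatingSeries s t (fun k => a (k + 2)) P)) := by
  have hsum (b : ℕ → R) : Summable fun k => C (b k) * alternatingMonomial s t k * P ^ k :=
    summable_mul_of_tendsto_order (tendsto_order_C_mul_alternatingMonomial s t b) _
  have hzero : (alternatingMonomial s t 0 : MvPowerSeries σ R) = 1 := by
    simp [alternatingMonomial]
  have hone : (alternatingMonomial s t 1 : MvPowerSeries σ R) = X s := by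
    simp [alternatingMonomial]
  have htail : ∑' k, C (a (k + 2)) * alternatingMonomial s t (k + 2) * P ^ (k + 2) =
      X s * X t * P ^ 2 * alternatingSeries s t (fun k => a (k + 2)) P := by
    rw [alternatingSeries, ← (hsum _).tsum_mul_left]
    refine tsum_congr fun k => ?_
    rw [alternatingMonomial_add_two]
    ring
  rw [alternatingSeries, ← (hsum a).sum_add_tsum_nat_add 2, htail, Finset.sum_range_succ,
    Finset.sum_range_one, hzero, hone]
  ring

theorem stmt2_general (s t : σ) {a : ℕ → R} (ha : IsUnit (a 1)) (c : MvPowerSeries σ R) :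
    ∃! P : MvPowerSeries σ R, alternatingSeries s t a P = C (a 0) + X s * c := by
  obtain ⟨b, hb⟩ := ha.exists_left_inv
  let g (P : MvPowerSeries σ R) := P ^ 2 * alternatingSeries s t (fun k => a (k + 2)) P
  have hg (P Q) : P - Q ∣ g P - g Q :=
    dvd_mul_sub_mul (sub_dvd_pow_sub_pow P Q 2) (sub_dvd_alternatingSeries_sub s t _ P Q)
  have hCb : (C b * C (a 1) : MvPowerSeries σ R) = 1 := by rw [← map_mul, hb, map_one]
  have hfix (P) : alternatingSeries s t a P = C (a 0) + X s * c ↔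
      P = C b * c - C b * X t * g P := by
    have hX : (X s : MvPowerSeries σ R) ∈ nonZeroDivisors _ := X_mem_nonzeroDivisors
    rw [alternatingSeries_eq_add_X_mul, add_right_inj, mul_cancel_left_mem_nonZeroDivisors hX]
    constructor <;> intro h
    · linear_combination C b * h - P * hCb
    · linear_combination C (a 1) * h + (c - X t * g P) * hCb
  have hw : constantCoeff (C b * X t : MvPowerSeries σ R) = 0 := by
    rw [map_mul, constantCoeff_X, mul_zero]
  simpa only [hfix] using existsUnique_eq_sub_mul_of_sub_dvd hw hg (C b * c)

end AlternatingSeries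

theorem S1_add_S2_eq_alternatingSeries (P : R2) :
    S1 P + S2 P = alternatingSeries 0 1 (fun k => (k.factorial : ℚ)⁻¹) P := by
  let F (k : ℕ) : R2 := C (k.factorial : ℚ)⁻¹ * alternatingMonomial 0 1 k * P ^ k
  have hF (k : ℕ) : (k : ℕ∞) ≤ (F k).order :=
    (le_order_C_mul_alternatingMonomial 0 1 _ k).trans (le_self_add.trans le_order_mul)
  have heven (n : ℕ) : F (2 * n) = ((2 * n).factorial : ℚ)⁻¹ • (P ^ (2 * n) * (u * v) ^ n) := by
    simp only [F, alternatingMonomial_two_mul, smul_eq_C_mul, u, v]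
    ring
  have hodd (n : ℕ) : F (2 * n + 1) =
      ((2 * n + 1).factorial : ℚ)⁻¹ • (P ^ (2 * n + 1) * u ^ (n + 1) * v ^ n) := by
    simp only [F, alternatingMonomial_two_mul_add_one, smul_eq_C_mul, u, v]
    ring
  have hS1 : HasSum (fun n => F (2 * n)) (S1 P) := by
    refine hasSum_of_coeff_eq_sum_range_coeff
      (fun n => (Nat.cast_le.2 (by lia)).trans (hF (2 * n))) fun m => ?_
    simp only [heven]
    rfl
  have hS2 : HasSum (fun n => F (2 * n + 1)) (S2 P) := by
    refine hasSum_of_coeff_eq_sum_range_coeff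
      (fun n => (Nat.cast_le.2 (by lia)).trans (hF (2 * n + 1))) fun m => ?_
    simp only [hodd]
    rfl
  exact (hS1.even_add_odd hS2).tsum_eq.symm

theorem stmt2 : ∃! P : R2, Eq21 P := by
  simpa [Eq21, S1_add_S2_eq_alternatingSeries, u] using
    stmt2_general (0 : Fin 2) 1 (a := fun k => (k.factorial : ℚ)⁻¹) (by simp) 1
end
end

section
/- In the series Ψ₀, the coefficient of u^p·v^q vanishes whenever p > q; hence Ψ₀ lies in ℚ[u][[v]], the coefficient of v^q being a polynomial in u of degree at most q. Moreover the coefficient of u^q·v^q in Ψ₀ is nonzero, so this polynomial has degree exactly q. -/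
noncomputable section

/-- generalized binomial coefficient C(−1/2, n) = (−1)ⁿ (2n choose n)/4ⁿ -/
def cb (n : ℕ) : ℚ := (-1)^n * (Nat.choose (2*n) n : ℚ) / 4^n

/-- Ψ₀ = Σ_{p,q} C(−1/2,p) C(−1/2,q) u^p v^q (u+2)^{p+q+1}/(2(p+q+1))
(coefficientwise finite sum). -/
def Psi0 : R2 := fun m =>
  ∑ p ∈ Finset.range (mdeg m + 1), ∑ q ∈ Finset.range (mdeg m + 1),
    MvPowerSeries.coeff (R := ℚ) m ((cb p * cb q / (2*(p+q+1))) • (u ^ p * v ^ q * (u + 2) ^ (p+q+1)))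

/-! Write `t = u(u + 2)`, so that `1 + t = (1 + u)²` and `dt = 2(1 + u) du`. The coefficient of
`v^q` in `Ψ₀` is `C(−1/2,q)/2 · u^{−q−1} · ∫ t^q (1 + t)^{−1/2} dt`, the integral being the formal
antiderivative with zero constant term. The change of variables from `t` to `u` turns it into
`∫ 2 (u(u + 2))^q du`: the square root disappears, and expanding the binomial shows that the
coefficient of `u^p v^q` in `Ψ₀` is `C(−1/2,q) · (q choose p) · 2^{q−p} / (p + q + 1)`. -/

section Substitution

open PowerSeries

theorem constantCoeff_subst_of_constantCoeff_eq_zero {R : Type*} [CommRing R] {g : R⟦X⟧}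
    (hg : constantCoeff g = 0) (f : R⟦X⟧) : constantCoeff (f.subst g) = constantCoeff f := by
  rw [← coeff_zero_eq_constantCoeff_apply, coeff_subst' (.of_constantCoeff_zero' hg),
    finsum_eq_single _ 0 fun d hd => by simp [hg, hd]]
  simp

theorem coeff_subst_X_mul {R : Type*} [CommRing R] (f h : R⟦X⟧) {n N : ℕ} (hn : n < N) :
    coeff n (f.subst (X * h)) = ∑ d ∈ Finset.range N, coeff d f * coeff n ((X * h) ^ d) := by
  rw [coeff_subst' (.of_constantCoeff_zero' (by simp))]
  refine finsum_eq_sum_of_support_subset _ fun d hd => ?_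
  by_contra hdN
  have hnd : ¬ d ≤ n := fun h => hdN (by simpa using h.trans_lt hn)
  exact hd (by simp [mul_pow, coeff_X_pow_mul', hnd])

theorem coeff_subst_X_mul_X_pow {σ R : Type*} [CommRing R] {i j : σ} (hij : i ≠ j)
    (f : R⟦X⟧) (m n k : ℕ) :
    MvPowerSeries.coeff (Finsupp.single i m + Finsupp.single j n)
      (f.subst (MvPowerSeries.X i : MvPowerSeries σ R) * MvPowerSeries.X j ^ k)
      = if k = n then coeff m f else 0 := by
  classical
  set e := Finsupp.single i m + Finsupp.single j n with he
  have hei : (e - Finsupp.single j k) i = m := by simp [he, hij]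
  have hexp : (Finsupp.single j k ≤ e ∧ e - Finsupp.single j k = Finsupp.single i m) ↔ k = n := by
    constructor
    · rintro ⟨hle, hsub⟩
      have hkn : k ≤ n := by simpa [he, hij] using hle j
      have hnk : n - k = 0 := by simpa [he, hij] using DFunLike.congr_fun hsub j
      lia
    · rintro rfl
      simp [he]
  rw [MvPowerSeries.X_pow_eq, MvPowerSeries.coeff_mul_monomial, mul_one, coeff_subst_single, hei,
    ← ite_and]
  exact if_congr hexp rfl rfl

theorem coeff_powerSeries_X_add_C_pow {R : Type*} [CommSemiring R] (r : R) (n k : ℕ) :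
    coeff k ((X + C r : R⟦X⟧) ^ n) = r ^ (n - k) * n.choose k := by
  have hcoe : (X + C r : R⟦X⟧) ^ n = ((Polynomial.X + Polynomial.C r : Polynomial R) ^ n :) := by
    simp
  rw [hcoe, Polynomial.coeff_coe, Polynomial.coeff_X_add_C_pow]

end Substitution

section Antiderivative

open PowerSeries

variable {K : Type*} [Field K]

/-- The formal antiderivative of a power series, with zero constant term. -/
def antideriv (f : K⟦X⟧) : K⟦X⟧ :=
  X * mk fun n => coeff n f / (n + 1)

theorem coeff_succ_antideriv (f : K⟦X⟧) (n : ℕ) :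
    coeff (n + 1) (antideriv f) = coeff n f / (n + 1) := by
  rw [antideriv, coeff_succ_X_mul, coeff_mk]

theorem constantCoeff_antideriv (f : K⟦X⟧) : constantCoeff (antideriv f) = 0 := by
  simp [antideriv]

theorem derivative_antideriv [CharZero K] (f : K⟦X⟧) : d⁄dX K (antideriv f) = f := by
  ext n
  rw [coeff_derivative, coeff_succ_antideriv, div_mul_cancel₀ _ n.cast_add_one_ne_zero]

theorem antideriv_subst [CharZero K] {g : K⟦X⟧} (hg : constantCoeff g = 0) (f : K⟦X⟧) :
    (antideriv f).subst g = antideriv (f.subst g * d⁄dX K g) := by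
  refine derivative.ext ?_ ?_
  · rw [derivative_subst (.of_constantCoeff_zero' hg), derivative_antideriv, derivative_antideriv]
  · rw [constantCoeff_subst_of_constantCoeff_eq_zero hg, constantCoeff_antideriv,
      constantCoeff_antideriv]

theorem coeff_antideriv_X_pow_mul (f : K⟦X⟧) (p q : ℕ) :
    coeff (q + 1 + p) (antideriv (X ^ q * f)) = coeff p f / (p + q + 1) := by
  rw [show q + 1 + p = p + q + 1 by ring, coeff_succ_antideriv, coeff_X_pow_mul]
  push_cast
  rfl

theorem coeff_antideriv_X_pow_mul_of_le (f : K⟦X⟧) {d q : ℕ} (hd : d ≤ q) :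
    coeff d (antideriv (X ^ q * f)) = 0 := by
  cases d with
  | zero => simp [constantCoeff_antideriv]
  | succ d => rw [coeff_succ_antideriv, coeff_X_pow_mul', if_neg (by lia), zero_div]

theorem coeff_antideriv_X_pow_mul_subst_X_mul (f h : K⟦X⟧) (q : ℕ) {m N : ℕ} (hm : m < N) :
    coeff (m + (q + 1)) ((antideriv (X ^ q * f)).subst (X * h))
      = ∑ p ∈ Finset.range N, coeff p f / (p + q + 1) * coeff m (X ^ p * h ^ (p + q + 1)) := by
  rw [coeff_subst_X_mul _ _ (show m + (q + 1) < q + 1 + N by lia), Finset.sum_range_add,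
    Finset.sum_eq_zero fun d hd => by
      rw [coeff_antideriv_X_pow_mul_of_le f (Finset.mem_range_succ_iff.mp hd), zero_mul], zero_add]
  refine Finset.sum_congr rfl fun p _ => ?_
  have hpow : (X * h) ^ (q + 1 + p) = X ^ (q + 1) * (X ^ p * h ^ (p + q + 1)) := by ring
  rw [coeff_antideriv_X_pow_mul, hpow, coeff_X_pow_mul]

end Antiderivative

section BinomialSeries

open PowerSeries

theorem binomialSeries_neg_half_sq_mul {A : Type*} [CommRing A] [Algebra ℚ A] :
    binomialSeries A (-1 / 2 : ℚ) ^ 2 * (1 + X) = 1 := by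
  have h_one : binomialSeries A (1 : ℚ) = 1 + X := by
    simpa using binomialSeries_nat (R := ℚ) (A := A) 1
  rw [← h_one, sq, ← binomialSeries_add, ← binomialSeries_add]
  norm_num

theorem binomialSeries_neg_half_subst_mul {A : Type*} [CommRing A] [IsDomain A] [Algebra ℚ A]
    {g h : A⟦X⟧} (hgh : 1 + g = h ^ 2) (hh : constantCoeff h = 1) :
    (binomialSeries A (-1 / 2 : ℚ)).subst g * h = 1 := by
  have hg : constantCoeff g = 0 := by
    simpa [hh] using congrArg (constantCoeff (R := A)) hgh
  have hsubst : HasSubst g := .of_constantCoeff_zero' hg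
  have hsq : ((binomialSeries A (-1 / 2 : ℚ)).subst g * h) ^ 2 = 1 := by
    have := congrArg (substAlgHom (R := A) hsubst) (binomialSeries_neg_half_sq_mul (A := A))
    simp only [map_mul, map_pow, map_add, map_one, substAlgHom_X, coe_substAlgHom, hgh] at this
    rw [mul_pow, this]
  have hconst : constantCoeff ((binomialSeries A (-1 / 2 : ℚ)).subst g * h) = 1 := by
    simp [constantCoeff_subst_of_constantCoeff_eq_zero hg, hh]
  refine (sq_eq_one_iff.mp hsq).resolve_right fun hneg => ?_
  have : CharZero A := algebraRat.charZero A
  have hneg_one : (-1 : A) = 1 := by simpa [hneg] using hconst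
  exact neg_ne_self.mpr one_ne_zero hneg_one

theorem antideriv_X_pow_mul_binomialSeries_subst {K : Type*} [Field K] [CharZero K] (q : ℕ) :
    (antideriv (X ^ q * binomialSeries K (-1 / 2 : ℚ))).subst (X * (X + 2) : K⟦X⟧)
      = antideriv (X ^ q * (2 * (X + 2) ^ q)) := by
  have hg : constantCoeff (X * (X + 2) : K⟦X⟧) = 0 := by simp
  have hsubst : HasSubst (X * (X + 2) : K⟦X⟧) := .of_constantCoeff_zero' hg
  have hsqrt : (binomialSeries K (-1 / 2 : ℚ)).subst (X * (X + 2) : K⟦X⟧) * (1 + X) = 1 :=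
    binomialSeries_neg_half_subst_mul (by ring) (by simp)
  have hderiv : d⁄dX K (X * (X + 2) : K⟦X⟧) = 2 * (1 + X) := by
    have htwo : d⁄dX K (2 : K⟦X⟧) = 0 := by exact_mod_cast (d⁄dX K).map_natCast 2
    rw [Derivation.leibniz, map_add, derivative_X, htwo, smul_eq_mul, smul_eq_mul]
    ring
  rw [antideriv_subst hg, subst_mul hsubst, subst_pow hsubst, subst_X hsubst, hderiv]
  congr 1
  rw [mul_pow]
  linear_combination 2 * (X ^ q * (X + 2) ^ q) * hsqrt

theorem succ_mul_ringChoose_succ {R : Type*} [Ring R] [BinomialRing R] (r : R) (n : ℕ) :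
    (n + 1) * Ring.choose r (n + 1) = Ring.choose r n * (r - n) := by
  simpa using Ring.choose_smul_choose r n.le_succ

theorem succ_mul_cb_succ (n : ℕ) : (n + 1) * cb (n + 1) = cb n * (-1 / 2 - n) := by
  have hcentral : ((n : ℚ) + 1) * (2 * (n + 1)).choose (n + 1)
      = 2 * (2 * n + 1) * (2 * n).choose n := by
    exact_mod_cast Nat.succ_mul_centralBinom_succ n
  calc (n + 1) * cb (n + 1)
      = (-1) ^ (n + 1) / 4 ^ (n + 1) * ((n + 1) * (2 * (n + 1)).choose (n + 1)) := by
        rw [cb]; ring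
    _ = cb n * (-1 / 2 - n) := by
        rw [hcentral, cb]; ring

theorem cb_eq_ringChoose (n : ℕ) : cb n = Ring.choose (-1 / 2 : ℚ) n := by
  induction n with
  | zero => simp [cb]
  | succ n ih =>
    have hn : (n : ℚ) + 1 ≠ 0 := by positivity
    refine mul_left_cancel₀ hn ?_
    rw [succ_mul_cb_succ, succ_mul_ringChoose_succ, ih]

theorem cb_ne_zero (n : ℕ) : cb n ≠ 0 := by
  have : (2 * n).choose n ≠ 0 := n.centralBinom_ne_zero
  simp [cb, this]

end BinomialSeries

section Coefficients

open PowerSeries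

theorem sum_cb_div_mul_coeff_X_pow_mul_X_add_two_pow (q : ℕ) {m N : ℕ} (hm : m < N) :
    ∑ p ∈ Finset.range N, cb p / (p + q + 1) * coeff m (X ^ p * (X + 2 : ℚ⟦X⟧) ^ (p + q + 1))
      = 2 * (2 ^ (q - m) * q.choose m) / (m + q + 1) := by
  have hcoeff : ∀ p, cb p = coeff p (binomialSeries ℚ (-1 / 2 : ℚ)) := fun p => by
    rw [cb_eq_ringChoose, binomialSeries_coeff, smul_eq_mul, mul_one]
  simp only [hcoeff]
  rw [← coeff_antideriv_X_pow_mul_subst_X_mul _ _ q hm, antideriv_X_pow_mul_binomialSeries_subst,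
    add_comm m, coeff_antideriv_X_pow_mul, ← map_ofNat C 2, coeff_C_mul,
    coeff_powerSeries_X_add_C_pow]

theorem coeff_Psi0_eq_sum (m n : ℕ) :
    MvPowerSeries.coeff (R := ℚ) (Finsupp.single (0 : Fin 2) m + Finsupp.single (1 : Fin 2) n) Psi0
      = cb n / 2 * ∑ p ∈ Finset.range (m + n + 1),
          cb p / (p + n + 1) * coeff m (X ^ p * (X + 2 : ℚ⟦X⟧) ^ (p + n + 1)) := by
  have hdeg : mdeg (Finsupp.single (0 : Fin 2) m + Finsupp.single (1 : Fin 2) n) = m + n := by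
    rw [mdeg, Finsupp.sum_add_index'] <;> simp
  have hterm : ∀ p q : ℕ, u ^ p * v ^ q * (u + 2) ^ (p + q + 1)
      = (X ^ p * (X + 2 : ℚ⟦X⟧) ^ (p + q + 1)).subst (MvPowerSeries.X 0 : R2)
        * MvPowerSeries.X 1 ^ q := by
    intro p q
    rw [← coe_substAlgHom (HasSubst.X (0 : Fin 2))]
    simp only [map_mul, map_pow, map_add, map_ofNat, substAlgHom_X, u, v]
    ring
  change ∑ p ∈ Finset.range (mdeg _ + 1), ∑ q ∈ Finset.range (mdeg _ + 1), _ = _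
  simp only [hdeg, hterm, map_smul, coeff_subst_X_mul_X_pow zero_ne_one]
  rw [Finset.mul_sum]
  refine Finset.sum_congr rfl fun p _ => ?_
  rw [Finset.sum_eq_single_of_mem n (Finset.mem_range.mpr (by lia))
    fun q _ hq => by rw [if_neg hq, smul_zero], if_pos rfl, smul_eq_mul]
  have hp : (p : ℚ) + n + 1 ≠ 0 := by positivity
  field_simp

-- For `n < m` the truncated exponent `n - m` does no harm, since then `n.choose m = 0`.
theorem coeff_Psi0 (m n : ℕ) :
    MvPowerSeries.coeff (R := ℚ) (Finsupp.single (0 : Fin 2) m + Finsupp.single (1 : Fin 2) n) Psi0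
      = cb n * n.choose m * 2 ^ (n - m) / (m + n + 1) := by
  rw [coeff_Psi0_eq_sum, sum_cb_div_mul_coeff_X_pow_mul_X_add_two_pow n (by lia)]
  ring

end Coefficients

theorem stmt5 :
    (∀ p q : ℕ, q < p →
      MvPowerSeries.coeff (R := ℚ) (Finsupp.single (0 : Fin 2) p + Finsupp.single (1 : Fin 2) q) Psi0 = 0) ∧
    (∀ q : ℕ,
      MvPowerSeries.coeff (R := ℚ) (Finsupp.single (0 : Fin 2) q + Finsupp.single (1 : Fin 2) q) Psi0 ≠ 0) := by
  refine ⟨fun p q hqp => ?_, fun q => ?_⟩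
  · rw [coeff_Psi0, Nat.choose_eq_zero_of_lt hqp]
    simp
  · have hq : (q : ℚ) + q + 1 ≠ 0 := by positivity
    rw [coeff_Psi0, Nat.choose_self]
    simpa [hq] using cb_ne_zero q
end
end
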